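/- For every U = (f, b, g, q) in the state space 𝒰, the four right eigenvectors r₁(U) = (−f/b, 1, 0, 0), r₂(U) = ((fb−3gq)/(4qb), (fb−3gq)/(4qf), g/q, 1), r₃(U) = (0, 0, −g/q, 1), r₄(U) = (0, 0, g/q, 1) are linearly independent in ℝ⁴ (equivalently, the 4×4 matrix with columns r₁(U), r₂(U), r₃(U), r₄(U) is invertible). -/

import Mathlib

/-- The right eigenvectors of the flux Jacobian of the reduced two-phase
thin-film system. -/
noncomputable def eigvec (f b g q : ℝ) : Fin 4 → (Fin 4 → ℝ) :=
  ![![-f/b, 1, 0, 0],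
    ![(f*b - 3*(g*q))/(4*q*b), (f*b - 3*(g*q))/(4*q*f), g/q, 1],
    ![0, 0, -g/q, 1],
    ![0, 0, g/q, 1]]

/-!
The matrix with rows `r₁, r₂, r₃, r₄` is block upper triangular with `2 × 2` blocks, and its
determinant is `g (f b - 3 g q) / (b q²)`. On the state space `f b < g q < 3 g q`, so it does not
vanish.
-/

theorem det_fin_four_of_block_upper_triangular {R : Type*} [CommRing R]
    (a₁₁ a₁₂ a₂₁ a₂₂ b₁₁ b₁₂ b₂₁ b₂₂ d₁₁ d₁₂ d₂₁ d₂₂ : R) :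
    Matrix.det !![a₁₁, a₁₂, b₁₁, b₁₂;
                  a₂₁, a₂₂, b₂₁, b₂₂;
                  0, 0, d₁₁, d₁₂;
                  0, 0, d₂₁, d₂₂] =
      Matrix.det !![a₁₁, a₁₂; a₂₁, a₂₂] * Matrix.det !![d₁₁, d₁₂; d₂₁, d₂₂] := by
  rw [← Matrix.det_fromBlocks_zero₂₁ _ !![b₁₁, b₁₂; b₂₁, b₂₂],
    ← Matrix.det_submatrix_equiv_self (finSumFinEquiv (m := 2) (n := 2))]
  congr 1
  ext i j
  rcases i with i | i <;> rcases j with j | j <;> fin_cases i <;> fin_cases j <;> rfl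

theorem det_eigvec {f : ℝ} (hf : f ≠ 0) (b g q : ℝ) :
    (Matrix.of (eigvec f b g q)).det = g * (f * b - 3 * (g * q)) / (b * q ^ 2) := by
  rw [eigvec, det_fin_four_of_block_upper_triangular, Matrix.det_fin_two_of,
    Matrix.det_fin_two_of]
  field_simp
  ring

theorem eigvec_linearIndependent_general {f b q : ℝ} (hf : f ≠ 0) (hb : b ≠ 0) (hq : q ≠ 0)
    (g : ℝ) :
    LinearIndependent ℝ (eigvec f b g q) ↔ g ≠ 0 ∧ f * b ≠ 3 * (g * q) := by
  calc LinearIndependent ℝ (eigvec f b g q)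
      ↔ (Matrix.of (eigvec f b g q)).det ≠ 0 := by
        rw [← isUnit_iff_ne_zero, ← Matrix.isUnit_iff_isUnit_det,
          ← Matrix.linearIndependent_rows_iff_isUnit]
        rfl
    _ ↔ g ≠ 0 ∧ f * b ≠ 3 * (g * q) := by
        simp [det_eigvec hf, hb, hq, sub_eq_zero]

/-- On the state space `𝒰`, the four right eigenvectors are linearly
independent in `ℝ⁴`. -/
theorem eigvec_linearIndependent (f b g q : ℝ)
    (hf : 0 < f) (hb : 0 < b) (hg : 0 < g) (hq : 0 < q) (hU : f*b < g*q) :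
    LinearIndependent ℝ (eigvec f b g q) := by
  have hK : f * b < 3 * (g * q) := by linarith [mul_pos hg hq]
  exact (eigvec_linearIndependent_general hf.ne' hb.ne' hq.ne' g).mpr ⟨hg.ne', hK.ne⟩
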